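/- Let X be an ∞-pseudo-metric space and let S be a set whose cardinality is larger than the cardinality of X × ℕ. Then X is exact if and only if there exist functions α : (0,∞) → (0,∞) and M : (0,∞) × (0,∞) → (0,∞) such that for every δ > 0, every K > 0, every subset A ⊆ X, and every (α(δ),α(δ))-Lipschitz K-cobounded map f : A → Δ(S), the map f extends to a (δ,δ)-Lipschitz M(δ,K)-cobounded map g : X → Δ(S). -/

import Mathlib

open scoped ENNReal

/-!
A partition of unity `φ : X → Δ(T)` turns any choice of points `v : T → Δ(S)` into the map
`x ↦ ∑ₜ φ x t • v t`, which varies no faster than `φ` because convex combinations are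
`1`-Lipschitz in the weights. Given `f : A → Δ(S)`, let `v t` be a value of `f` on the stratum of
`t` when that stratum meets `A`, and otherwise a vertex of `Δ(S)` which `f` does not use and which
belongs to `t` alone; there are enough such vertices because every point of `Δ(S)` has countable
support. At a point of `A`, the average is close to `f`, as it only involves values of `f` at
distance at most the diameter of a stratum, so overwriting it by `f` on `A` changes
it little. At large scales nothing has to be checked, since `Δ(S)` has diameter at most `2`.
Conversely, an extension of the empty map is a partition of unity.
-/

open Cardinal Function Set

universe u v

section L1

variable {S T E : Type*}

/-- The `ℓ¹` distance between two functions. It is only meaningful when their difference is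
summable, being `0` otherwise. -/
noncomputable def l1Dist (p q : S → ℝ) : ℝ := ∑' s, |p s - q s|

theorem l1Dist_self (p : S → ℝ) : l1Dist p p = 0 := by simp [l1Dist]

theorem l1Dist_comm (p q : S → ℝ) : l1Dist p q = l1Dist q p := by
  simp only [l1Dist, abs_sub_comm]

theorem l1Dist_triangle {p q r : S → ℝ} (hp : Summable p) (hq : Summable q) (hr : Summable r) :
    l1Dist p r ≤ l1Dist p q + l1Dist q r := by
  have hpq := (hp.sub hq).abs
  have hqr := (hq.sub hr).abs
  calc l1Dist p r ≤ ∑' s, (|p s - q s| + |q s - r s|) :=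
        (hp.sub hr).abs.tsum_le_tsum (fun s => abs_sub_le _ _ _) (hpq.add hqr)
    _ = l1Dist p q + l1Dist q r := hpq.tsum_add hqr

theorem l1Dist_le_tsum_add_tsum {p q : S → ℝ} (hp₀ : 0 ≤ p) (hq₀ : 0 ≤ q) (hp : Summable p)
    (hq : Summable q) : l1Dist p q ≤ ∑' s, p s + ∑' s, q s := by
  rw [← hp.tsum_add hq]
  refine (hp.sub hq).abs.tsum_le_tsum (fun s => ?_) (hp.add hq)
  simpa only [abs_of_nonneg (hp₀ s), abs_of_nonneg (hq₀ s)] using abs_sub (p s) (q s)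

theorem tsum_norm_tsum_le_tsum_tsum_norm [SeminormedAddCommGroup E] {F : T → S → E}
    (hF : Summable fun p : T × S => ‖F p.1 p.2‖) :
    ∑' s, ‖∑' t, F t s‖ ≤ ∑' t, ∑' s, ‖F t s‖ := by
  have hbound : ∀ s, ‖∑' t, F t s‖ ≤ ∑' t, ‖F t s‖ := fun s =>
    norm_tsum_le_tsum_norm (hF.prod_symm.prod_factor s)
  have hsum : Summable fun s => ∑' t, ‖F t s‖ := hF.prod_symm.prod
  calc ∑' s, ‖∑' t, F t s‖ ≤ ∑' s, ∑' t, ‖F t s‖ :=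
        (Summable.of_nonneg_of_le (fun _ => norm_nonneg _) hbound hsum).tsum_le_tsum hbound hsum
    _ = ∑' t, ∑' s, ‖F t s‖ := Summable.tsum_comm hF

end L1

section Simplex

variable {X S T : Type*}

/-- `f` takes values in the full simplex `Δ(S)`. -/
def IsSimplexMap (f : X → S → ℝ) : Prop :=
  (∀ x s, 0 ≤ f x s) ∧ ∀ x, HasSum (fun s => f x s) 1

/-- The combination `∑ₜ w t • v t` of the points `v t`, with weights `w`. -/
noncomputable def mixture (w : T → ℝ) (v : T → S → ℝ) (s : S) : ℝ := ∑' t, w t * v t s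

namespace IsSimplexMap

variable {v : T → S → ℝ} {w w' : T → ℝ}

theorem summable {f : X → S → ℝ} (hf : IsSimplexMap f) (x : X) : Summable (f x) :=
  (hf.2 x).summable

theorem apply_le_one {f : X → S → ℝ} (hf : IsSimplexMap f) (x : X) (s : S) : f x s ≤ 1 :=
  le_hasSum (hf.2 x) s fun _ _ => hf.1 x _

theorem l1Dist_le_two {f : X → S → ℝ} (hf : IsSimplexMap f) (x y : X) :
    l1Dist (f x) (f y) ≤ 2 := by
  have h := l1Dist_le_tsum_add_tsum (hf.1 x) (hf.1 y) (hf.summable x) (hf.summable y)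
  rwa [(hf.2 x).tsum_eq, (hf.2 y).tsum_eq, one_add_one_eq_two] at h

theorem tsum_abs_mul (hv : IsSimplexMap v) (c : ℝ) (t : T) : ∑' s, |c * v t s| = |c| := by
  simp only [abs_mul, abs_of_nonneg (hv.1 t _), tsum_mul_left, (hv.2 t).tsum_eq, mul_one]

theorem summable_mul (hv : IsSimplexMap v) (hw : Summable w) :
    Summable fun p : T × S => w p.1 * v p.1 p.2 := by
  have habs : Summable fun p : T × S => |w p.1 * v p.1 p.2| := by
    refine (summable_prod_of_nonneg fun _ => abs_nonneg _).2
      ⟨fun t => ((hv.summable t).mul_left (w t)).abs, ?_⟩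
    simpa only [hv.tsum_abs_mul] using hw.abs
  exact habs.of_abs

theorem summable_mul_apply (hv : IsSimplexMap v) (hw : Summable w) (s : S) :
    Summable fun t => w t * v t s :=
  (hv.summable_mul hw).prod_symm.prod_factor s

theorem hasSum_mixture (hv : IsSimplexMap v) (hw : Summable w) :
    HasSum (mixture w v) (∑' t, w t) := by
  have hwv := hv.summable_mul hw
  have hsum : Summable (mixture w v) := hwv.prod_symm.prod
  have htsum : ∑' s, mixture w v s = ∑' t, w t :=
    calc ∑' s, mixture w v s = ∑' t, ∑' s, w t * v t s :=
          Summable.tsum_comm (f := fun t s => w t * v t s) hwv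
      _ = ∑' t, w t := by simp only [tsum_mul_left, (hv.2 _).tsum_eq, mul_one]
  exact htsum ▸ hsum.hasSum

protected theorem mixture {φ : X → T → ℝ} (hφ : IsSimplexMap φ) (hv : IsSimplexMap v) :
    IsSimplexMap fun x => mixture (φ x) v :=
  ⟨fun x s => tsum_nonneg fun t => mul_nonneg (hφ.1 x t) (hv.1 t s),
    fun x => (hφ.2 x).tsum_eq ▸ hv.hasSum_mixture (hφ.summable x)⟩

theorem l1Dist_mixture_mixture_le (hv : IsSimplexMap v) (hw : Summable w) (hw' : Summable w') :
    l1Dist (mixture w v) (mixture w' v) ≤ l1Dist w w' := by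
  have hsub : ∀ s, mixture w v s - mixture w' v s = ∑' t, (w t - w' t) * v t s := fun s => by
    simp only [sub_mul]
    exact ((hv.summable_mul_apply hw s).tsum_sub (hv.summable_mul_apply hw' s)).symm
  calc l1Dist (mixture w v) (mixture w' v) = ∑' s, |∑' t, (w t - w' t) * v t s| := by
        simp only [l1Dist, hsub]
    _ ≤ ∑' t, ∑' s, |(w t - w' t) * v t s| :=
        tsum_norm_tsum_le_tsum_tsum_norm (F := fun t s => (w t - w' t) * v t s)
          (hv.summable_mul (hw.sub hw')).norm
    _ = l1Dist w w' := by simp only [hv.tsum_abs_mul, l1Dist]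

theorem l1Dist_mixture_le (hv : IsSimplexMap v) (hw₀ : 0 ≤ w) (hw : HasSum w 1) {p : S → ℝ}
    (hp : Summable p) {ε : ℝ} (h : ∀ t, 0 < w t → l1Dist p (v t) ≤ ε) :
    l1Dist p (mixture w v) ≤ ε := by
  have hF : Summable fun q : T × S => |w q.1 * (p q.2 - v q.1 q.2)| := by
    simp only [mul_sub]
    exact ((summable_mul_of_summable_norm hw.summable.norm hp.norm).sub
      (hv.summable_mul hw.summable)).abs
  have hsub : ∀ s, p s - mixture w v s = ∑' t, w t * (p s - v t s) := fun s => by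
    simp only [mul_sub]
    rw [(hw.summable.mul_right _).tsum_sub (hv.summable_mul_apply hw.summable s),
      tsum_mul_right, hw.tsum_eq, one_mul, mixture]
  have hterm : ∀ t, ∑' s, |w t * (p s - v t s)| = w t * l1Dist p (v t) := fun t => by
    simp only [abs_mul, abs_of_nonneg (hw₀ t), tsum_mul_left, l1Dist]
  have hle : ∀ t, w t * l1Dist p (v t) ≤ w t * ε := fun t => by
    rcases (hw₀ t).eq_or_lt with h₀ | h₀
    · simp only [← h₀, Pi.zero_apply, zero_mul, le_refl]
    · exact mul_le_mul_of_nonneg_left (h t h₀) h₀.le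
  have hsum : Summable fun t => w t * l1Dist p (v t) := by
    simpa only [hterm] using hF.prod
  calc l1Dist p (mixture w v) = ∑' s, |∑' t, w t * (p s - v t s)| := by simp only [l1Dist, hsub]
    _ ≤ ∑' t, ∑' s, |w t * (p s - v t s)| :=
        tsum_norm_tsum_le_tsum_tsum_norm (F := fun t s => w t * (p s - v t s)) hF
    _ = ∑' t, w t * l1Dist p (v t) := by simp only [hterm]
    _ ≤ ∑' t, w t * ε := hsum.tsum_le_tsum hle (hw.summable.mul_right ε)
    _ = ε := by rw [tsum_mul_right, hw.tsum_eq, one_mul]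

end IsSimplexMap

theorem exists_pos_of_mixture_ne_zero {w : T → ℝ} {v : T → S → ℝ} (hw : 0 ≤ w)
    (hv : ∀ t s, 0 ≤ v t s) {s : S} (h : mixture w v s ≠ 0) : ∃ t, 0 < w t ∧ 0 < v t s := by
  obtain ⟨t, ht⟩ : ∃ t, w t * v t s ≠ 0 := by
    by_contra! h₀
    exact h (by simp only [mixture, h₀, tsum_zero])
  exact ⟨t, (hw t).lt_of_ne' (left_ne_zero_of_mul ht),
    (hv t s).lt_of_ne' (right_ne_zero_of_mul ht)⟩

end Simplex

section Metric

variable {X S : Type*} [PseudoEMetricSpace X] {f : X → S → ℝ} {K : ℝ≥0∞} {R L C ε : ℝ}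

/-- `f` is `(L, C)`-Lipschitz for the `ℓ¹` distance; pairs at infinite distance are
unconstrained. -/
def IsCoarseLipschitz (L C : ℝ) (f : X → S → ℝ) : Prop :=
  ∀ x y : X, edist x y ≠ ⊤ → l1Dist (f x) (f y) ≤ L * (edist x y).toReal + C

/-- `f` is `(ε, R)`-continuous for the `ℓ¹` distance. -/
def IsContinuousAtScale (ε R : ℝ) (f : X → S → ℝ) : Prop :=
  ∀ x y : X, edist x y ≤ ENNReal.ofReal R → l1Dist (f x) (f y) ≤ ε

/-- `f` is `K`-cobounded: its strata `{x | 0 < f x s}` have diameter at most `K`. -/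
def IsCobounded (K : ℝ≥0∞) (f : X → S → ℝ) : Prop :=
  ∀ s, Metric.ediam {x | 0 < f x s} ≤ K

/-- Exactness of `X`: uniformly bounded `(ε, R)`-continuous partitions of unity exist for all `R`
and `ε`. The universe `v` is that of their index types. -/
def IsExact (X : Type u) [PseudoEMetricSpace X] : Prop :=
  ∀ R ε : ℝ, 0 < R → 0 < ε → ∃ (T : Type v) (φ : T → X → ℝ),
    (∀ t x, 0 ≤ φ t x ∧ φ t x ≤ 1) ∧
    (∀ x, HasSum (fun t => φ t x) 1) ∧
    IsContinuousAtScale ε R (fun x t => φ t x) ∧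
    ∃ D : ℝ, 0 < D ∧ IsCobounded (ENNReal.ofReal D) (fun x t => φ t x)

theorem isExact_iff {X : Type u} [PseudoEMetricSpace X] :
    IsExact.{u, v} X ↔ ∀ R ε : ℝ, 0 < R → 0 < ε → ∃ (T : Type v) (φ : X → T → ℝ),
      IsSimplexMap φ ∧ IsContinuousAtScale ε R φ ∧
      ∃ D : ℝ, 0 < D ∧ IsCobounded (ENNReal.ofReal D) φ := by
  refine forall₄_congr fun _ _ _ _ => exists_congr fun T => ⟨?_, ?_⟩
  · rintro ⟨φ, h01, hsum, h⟩
    exact ⟨fun x t => φ t x, ⟨fun x t => (h01 t x).1, hsum⟩, h⟩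
  · rintro ⟨φ, hφ, h⟩
    exact ⟨fun t x => φ x t, fun t x => ⟨hφ.1 x t, hφ.apply_le_one x t⟩, hφ.2, h⟩

theorem IsCoarseLipschitz.isContinuousAtScale (hf : IsCoarseLipschitz L C f) (hL : 0 ≤ L)
    (hR : 0 ≤ R) : IsContinuousAtScale (L * R + C) R f := fun x y hxy => by
  have hxy' : (edist x y).toReal ≤ R := ENNReal.toReal_le_of_le_ofReal hR hxy
  calc l1Dist (f x) (f y) ≤ L * (edist x y).toReal + C :=
        hf x y (ne_top_of_le_ne_top ENNReal.ofReal_ne_top hxy)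
    _ ≤ L * R + C := by gcongr

theorem IsContinuousAtScale.isCoarseLipschitz (hf : IsContinuousAtScale C (2 / L) f)
    (hf' : IsSimplexMap f) (hL : 0 < L) (hC : 0 ≤ C) : IsCoarseLipschitz L C f := fun x y hxy => by
  rcases le_total (edist x y).toReal (2 / L) with hnear | hfar
  · have hxy' := (ENNReal.le_ofReal_iff_toReal_le hxy (by positivity)).2 hnear
    exact (hf x y hxy').trans (le_add_of_nonneg_left (by positivity))
  · rw [div_le_iff₀' hL] at hfar
    exact (hf'.l1Dist_le_two x y).trans (hfar.trans (le_add_of_nonneg_right hC))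

theorem IsContinuousAtScale.of_l1Dist_le {g h : X → S → ℝ} (hh : IsContinuousAtScale C R h)
    (hg : ∀ x, Summable (g x)) (hhs : ∀ x, Summable (h x)) (hgh : ∀ x, l1Dist (g x) (h x) ≤ ε) :
    IsContinuousAtScale (2 * ε + C) R g := fun x y hxy =>
  calc l1Dist (g x) (g y)
      ≤ l1Dist (g x) (h x) + l1Dist (h x) (h y) + l1Dist (h y) (g y) := by
        linarith [l1Dist_triangle (hg x) (hhs x) (hg y), l1Dist_triangle (hhs x) (hhs y) (hg y)]
    _ ≤ ε + C + ε := by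
        rw [l1Dist_comm (h y)]
        gcongr
        exacts [hgh x, hh x y hxy, hgh y]
    _ = 2 * ε + C := by ring

theorem IsCobounded.edist_le (hf : IsCobounded K f) {s : S} {x y : X} (hx : 0 < f x s)
    (hy : 0 < f y s) : edist x y ≤ K :=
  Metric.ediam_le_iff.1 (hf s) x hx y hy

end Metric

section Vertices

variable {X S T : Type*}

/-- The vertices `s` of `Δ(S)` used by `f`, i.e. those with a nonempty stratum. -/
def usedVertices (f : X → S → ℝ) : Set S := ⋃ x, support (f x)

theorem mem_usedVertices {f : X → S → ℝ} {x : X} {s : S} (h : f x s ≠ 0) : s ∈ usedVertices f :=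
  mem_iUnion.2 ⟨x, h⟩

theorem lift_mk_usedVertices_le {X : Type u} {S : Type v} {f : X → S → ℝ}
    (hf : ∀ x, Summable (f x)) :
    lift.{u} #(usedVertices f) ≤ lift.{v} #(X × ℕ) := by
  have hcountable : ∀ x, lift.{u} #(support (f x)) ≤ ℵ₀ := fun x =>
    lift_le_aleph0.2 (hf x).countable_support.le_aleph0
  calc lift.{u} #(usedVertices f) ≤ lift.{v} #X * ⨆ x, lift.{u} #(support (f x)) :=
        mk_iUnion_le_lift _
    _ ≤ lift.{v} #X * ℵ₀ := by gcongr; exact ciSup_le' hcountable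
    _ = lift.{v} #(X × ℕ) := by simp

theorem lt_mk_compl {S : Type u} {U : Set S} {κ : Cardinal.{max u v}} (hκ : κ + κ ≤ κ)
    (hS : κ < lift.{v} #S) (hU : lift.{v} #U ≤ κ) : κ < lift.{v} #(Uᶜ : Set S) := by
  by_contra! hU'
  refine hS.not_ge ?_
  calc lift.{v} #S = lift.{v} #U + lift.{v} #(Uᶜ : Set S) := by rw [← lift_add, mk_sum_compl]
    _ ≤ κ + κ := add_le_add hU hU'
    _ ≤ κ := hκ

theorem exists_mapsTo_injOn_of_embedding [Nonempty S] {V : Set T} {U : Set S} (j : V ↪ U) :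
    ∃ ι : T → S, MapsTo ι V U ∧ InjOn ι V := by
  let ι : T → S := extend (↑) (fun t : V => (j t : S)) fun _ => Classical.arbitrary S
  have hι : ∀ t : V, ι t = j t := Subtype.val_injective.extend_apply _ _
  refine ⟨ι, fun t ht => hι ⟨t, ht⟩ ▸ (j ⟨t, ht⟩).2, fun t ht t' ht' h => ?_⟩
  rw [hι ⟨t, ht⟩, hι ⟨t', ht'⟩] at h
  exact congrArg Subtype.val (j.injective (Subtype.ext h))

theorem exists_fresh_vertices {X : Type u} {S T : Type v} {A : Set X} {φ : X → T → ℝ}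
    {f : A → S → ℝ} (hcard : lift.{v} #(X × ℕ) < lift.{u} #S) (hφ : ∀ x, Summable (φ x))
    (hf : ∀ a, Summable (f a)) :
    ∃ ι : T → S, MapsTo ι (usedVertices φ) (usedVertices f)ᶜ ∧ InjOn ι (usedVertices φ) := by
  have : Nonempty S := by
    by_contra! hS
    simp at hcard
  have hA : lift.{v} #(A × ℕ) ≤ lift.{v} #(X × ℕ) :=
    lift_le.2 (mk_le_of_injective (Subtype.val_injective.prodMap injective_id))
  have hfree := lt_mk_compl (by simp [← mul_add]) hcard ((lift_mk_usedVertices_le hf).trans hA)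
  obtain ⟨j⟩ := (Cardinal.le_def _ _).1
    (lift_le.1 ((lift_mk_usedVertices_le hφ).trans hfree.le))
  exact exists_mapsTo_injOn_of_embedding j

end Vertices

section Extension

variable {X S T : Type*} {A : Set X} {φ : X → T → ℝ} {f : A → S → ℝ} {ι : T → S}

open scoped Classical in
/-- The point of `Δ(S)` attached to the stratum of `t`: a value of `f` on that stratum if it meets
`A`, and the vertex `ι t` otherwise. -/
noncomputable def stratumValue (φ : X → T → ℝ) (f : A → S → ℝ) (ι : T → S) (t : T) : S → ℝ :=
  if h : ∃ a : A, 0 < φ a t then f h.choose else Pi.single (ι t) 1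

theorem exists_stratumValue_eq {t : T} (h : ∃ a : A, 0 < φ a t) :
    ∃ a : A, 0 < φ a t ∧ stratumValue φ f ι t = f a :=
  ⟨h.choose, h.choose_spec, dif_pos h⟩

open scoped Classical in
theorem stratumValue_of_forall_not_pos {t : T} (h : ¬∃ a : A, 0 < φ a t) :
    stratumValue φ f ι t = Pi.single (ι t) 1 :=
  dif_neg h

theorem IsSimplexMap.stratumValue (hf : IsSimplexMap f) : IsSimplexMap (stratumValue φ f ι) := by
  classical
  refine forall_and.1 fun t => ?_
  by_cases h : ∃ a : A, 0 < φ a t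
  · obtain ⟨a, -, ha⟩ := exists_stratumValue_eq (f := f) (ι := ι) h
    exact ha ▸ ⟨hf.1 a, hf.2 a⟩
  · rw [stratumValue_of_forall_not_pos h]
    have hnonneg : 0 ≤ (Pi.single (ι t) 1 : S → ℝ) := Pi.single_nonneg.2 zero_le_one
    exact ⟨hnonneg, hasSum_pi_single (ι t) 1⟩

open scoped Classical in
/-- The extension of `f` to `X` which averages the values `stratumValue φ f ι` outside `A`. -/
noncomputable def simplexExtension (φ : X → T → ℝ) (f : A → S → ℝ) (ι : T → S) (x : X) : S → ℝ :=
  if h : x ∈ A then f ⟨x, h⟩ else mixture (φ x) (stratumValue φ f ι)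

theorem simplexExtension_coe (a : A) : simplexExtension φ f ι a = f a :=
  dif_pos a.2

theorem simplexExtension_of_notMem {x : X} (hx : x ∉ A) :
    simplexExtension φ f ι x = mixture (φ x) (stratumValue φ f ι) :=
  dif_neg hx

theorem IsSimplexMap.simplexExtension (hφ : IsSimplexMap φ) (hf : IsSimplexMap f) :
    IsSimplexMap (simplexExtension φ f ι) := by
  have hmix := hφ.mixture (hf.stratumValue (φ := φ) (ι := ι))
  refine forall_and.1 fun x => ?_
  by_cases hx : x ∈ A
  · lift x to A using hx
    exact simplexExtension_coe (φ := φ) x ▸ ⟨hf.1 x, hf.2 x⟩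
  · exact simplexExtension_of_notMem hx ▸ ⟨hmix.1 x, hmix.2 x⟩

variable [PseudoEMetricSpace X] {D K : ℝ≥0∞}

theorem l1Dist_simplexExtension_mixture_le (hφ : IsSimplexMap φ) (hf : IsSimplexMap f) {ε D : ℝ}
    (hε : 0 ≤ ε) (hφD : IsCobounded (ENNReal.ofReal D) φ) (hfc : IsContinuousAtScale ε D f)
    (x : X) :
    l1Dist (simplexExtension φ f ι x) (mixture (φ x) (stratumValue φ f ι)) ≤ ε := by
  by_cases hx : x ∈ A
  · lift x to A using hx
    rw [simplexExtension_coe]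
    refine hf.stratumValue.l1Dist_mixture_le (hφ.1 x) (hφ.2 x) (hf.summable x) fun t ht => ?_
    obtain ⟨a, ha, hat⟩ := exists_stratumValue_eq (f := f) (ι := ι) ⟨x, ht⟩
    exact hat ▸ hfc x a (hφD.edist_le ht ha)
  · rwa [simplexExtension_of_notMem hx, l1Dist_self]

theorem IsContinuousAtScale.simplexExtension {ε C R D : ℝ} (hφc : IsContinuousAtScale C R φ)
    (hfc : IsContinuousAtScale ε D f) (hε : 0 ≤ ε) (hφ : IsSimplexMap φ) (hf : IsSimplexMap f)
    (hφD : IsCobounded (ENNReal.ofReal D) φ) :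
    IsContinuousAtScale (2 * ε + C) R (simplexExtension φ f ι) := by
  have hmix : IsContinuousAtScale C R fun x => mixture (φ x) (stratumValue φ f ι) :=
    fun x y hxy => (hf.stratumValue.l1Dist_mixture_mixture_le (hφ.summable x)
      (hφ.summable y)).trans (hφc x y hxy)
  exact hmix.of_l1Dist_le (hφ.simplexExtension hf).summable
    (hφ.mixture hf.stratumValue).summable
    (l1Dist_simplexExtension_mixture_le hφ hf hε hφD hfc)

theorem edist_le_or_eq_of_simplexExtension_pos (hφ : ∀ x t, 0 ≤ φ x t) (hf : IsSimplexMap f)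
    (hφD : IsCobounded D φ) {x : X} {s : S} (hx : 0 < simplexExtension φ f ι x s) :
    (∃ a : A, 0 < f a s ∧ edist x a ≤ D) ∨ ∃ t, 0 < φ x t ∧ ι t = s := by
  classical
  by_cases hxA : x ∈ A
  · lift x to A using hxA
    rw [simplexExtension_coe] at hx
    exact .inl ⟨x, hx, by simp⟩
  rw [simplexExtension_of_notMem hxA] at hx
  obtain ⟨t, hxt, hts⟩ := exists_pos_of_mixture_ne_zero (hφ x) hf.stratumValue.1 hx.ne'
  by_cases h : ∃ a : A, 0 < φ a t
  · obtain ⟨a, ha, hat⟩ := exists_stratumValue_eq (f := f) (ι := ι) h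
    exact .inl ⟨a, hat ▸ hts, hφD.edist_le hxt ha⟩
  · rw [stratumValue_of_forall_not_pos h] at hts
    exact .inr ⟨t, hxt, by_contra fun hne => hts.ne' (Pi.single_eq_of_ne' hne 1)⟩

theorem IsCobounded.simplexExtension (hφD : IsCobounded D φ) (hfK : IsCobounded K f)
    (hφ : ∀ x t, 0 ≤ φ x t) (hf : IsSimplexMap f)
    (hι : MapsTo ι (usedVertices φ) (usedVertices f)ᶜ) (hinj : InjOn ι (usedVertices φ)) :
    IsCobounded (K + 2 * D) (simplexExtension φ f ι) := by
  have hfresh : ∀ x t a, 0 < φ x t → ¬0 < f a (ι t) := fun x t a hxt hat =>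
    hι (mem_usedVertices hxt.ne') (mem_usedVertices hat.ne')
  refine fun s => Metric.ediam_le_iff.2 fun x hx y hy => ?_
  rcases edist_le_or_eq_of_simplexExtension_pos hφ hf hφD hx with ⟨a, ha, hxa⟩ | ⟨t, ht, rfl⟩ <;>
  rcases edist_le_or_eq_of_simplexExtension_pos hφ hf hφD hy with ⟨b, hb, hyb⟩ | ⟨t', ht', htt'⟩
  · calc edist x y ≤ edist x a + edist (a : X) b + edist (b : X) y := edist_triangle4 _ _ _ _
      _ ≤ D + K + D := by
          rw [edist_comm (b : X) y]
          gcongr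
          exact hfK.edist_le ha hb
      _ = K + 2 * D := by ring
  · exact absurd (htt' ▸ ha) (hfresh y t' a ht')
  · exact absurd hb (hfresh x t b ht)
  · obtain rfl := hinj (mem_usedVertices ht'.ne') (mem_usedVertices ht.ne') htt'
    calc edist x y ≤ D := hφD.edist_le ht ht'
      _ ≤ 2 * D := le_mul_of_one_le_left' one_le_two
      _ ≤ K + 2 * D := le_add_self

end Extension

theorem IsExact.exists_extension {X : Type u} {S : Type v} [PseudoEMetricSpace X]
    (hX : IsExact.{u, v} X) (hcard : lift.{v} #(X × ℕ) < lift.{u} #S) {δ : ℝ} (hδ : 0 < δ) :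
    ∃ D : ℝ, 0 < D ∧ ∀ (K : ℝ≥0∞) (A : Set X) (f : A → S → ℝ), IsSimplexMap f →
      IsCoarseLipschitz (δ / (4 * (D + 1))) (δ / (4 * (D + 1))) f → IsCobounded K f →
      ∃ g : X → S → ℝ, IsSimplexMap g ∧ IsCoarseLipschitz δ δ g ∧
        IsCobounded (K + 2 * ENNReal.ofReal D) g ∧ ∀ a : A, g a = f a := by
  obtain ⟨T, φ, hφ, hφc, D, hD, hφD⟩ :=
    isExact_iff.1 hX (2 / δ) (δ / 2) (by positivity) (by positivity)
  refine ⟨D, hD, fun K A f hf hfL hfK => ?_⟩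
  obtain ⟨ι, hι, hinj⟩ := exists_fresh_vertices hcard hφ.summable hf.summable
  have hfc : IsContinuousAtScale (δ / 4) D f := by
    convert hfL.isContinuousAtScale (by positivity) hD.le using 1
    field_simp
  have hg : IsSimplexMap (simplexExtension φ f ι) := hφ.simplexExtension hf
  have hgc : IsContinuousAtScale δ (2 / δ) (simplexExtension φ f ι) := by
    convert hφc.simplexExtension hfc (by positivity) hφ hf hφD using 1
    ring
  exact ⟨simplexExtension φ f ι, hg, hgc.isCoarseLipschitz hg hδ hδ.le,
    hφD.simplexExtension hfK hφ.1 hf hι hinj, simplexExtension_coe⟩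

theorem stmt5_general {X : Type u} {S : Type v} [PseudoEMetricSpace X]
    (hcard : lift.{v} #(X × ℕ) < lift.{u} #S) :
    IsExact.{u, v} X ↔ ∃ (α : ℝ → ℝ) (M : ℝ → ℝ → ℝ),
      (∀ δ : ℝ, 0 < δ → 0 < α δ) ∧
      (∀ δ K : ℝ, 0 < δ → 0 < K → 0 < M δ K) ∧
      ∀ δ : ℝ, 0 < δ → ∀ K : ℝ, 0 < K → ∀ A : Set X, ∀ f : A → S → ℝ,
        IsSimplexMap f → IsCoarseLipschitz (α δ) (α δ) f → IsCobounded (ENNReal.ofReal K) f →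
        ∃ g : X → S → ℝ, IsSimplexMap g ∧ IsCoarseLipschitz δ δ g ∧
          IsCobounded (ENNReal.ofReal (M δ K)) g ∧ ∀ a : A, g a = f a := by
  constructor
  · intro hX
    choose! D hD hext using fun (δ : ℝ) (hδ : 0 < δ) => hX.exists_extension hcard hδ
    refine ⟨fun δ => δ / (4 * (D δ + 1)), fun δ K => K + 2 * D δ, fun δ hδ => ?_,
      fun δ K hδ hK => ?_, fun δ hδ K hK A f hf hfL hfK => ?_⟩
    · have := hD δ hδ
      positivity
    · have := hD δ hδ
      positivity
    · have := hD δ hδ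
      rw [ENNReal.ofReal_add hK.le (by positivity), ENNReal.ofReal_mul zero_le_two,
        ENNReal.ofReal_ofNat]
      exact hext δ hδ _ A f hf hfL hfK
  · rintro ⟨α, M, -, hM, hext⟩
    refine isExact_iff.2 fun R ε hR hε => ?_
    have hδ : 0 < ε / (R + 1) := by positivity
    obtain ⟨g, hg, hgL, hgM, -⟩ := hext (ε / (R + 1)) hδ 1 one_pos ∅ isEmptyElim
      ⟨isEmptyElim, isEmptyElim⟩ isEmptyElim fun s => Metric.ediam_le_iff.2 isEmptyElim
    have hgc : IsContinuousAtScale ε R g := by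
      convert hgL.isContinuousAtScale hδ.le hR.le using 1
      field_simp
    exact ⟨S, g, hg, hgc, M _ 1, hM _ 1 hδ one_pos, hgM⟩

/-- For an ∞-pseudo-metric space `X` and a set `S` of cardinality larger than
`card (X × ℕ)`, exactness of `X` is equivalent to the existence of functions
`α : (0,∞) → (0,∞)` and `M : (0,∞)² → (0,∞)` such that every `(α(δ),α(δ))`-Lipschitz
`K`-cobounded map `f : A → Δ(S)` defined on a subset `A ⊆ X` extends to a
`(δ,δ)`-Lipschitz `M(δ,K)`-cobounded map `g : X → Δ(S)`. -/
theorem stmt5 {X S : Type} [PseudoEMetricSpace X]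
    (hcard : Cardinal.mk (X × ℕ) < Cardinal.mk S) :
    (∀ R ε : ℝ, 0 < R → 0 < ε → ∃ (T : Type) (φ : T → X → ℝ),
      (∀ t x, 0 ≤ φ t x ∧ φ t x ≤ 1) ∧
      (∀ x, HasSum (fun t => φ t x) 1) ∧
      (∀ x y : X, edist x y ≤ ENNReal.ofReal R → (∑' t, |φ t x - φ t y|) ≤ ε) ∧
      (∃ D : ℝ, 0 < D ∧ ∀ t, EMetric.diam {x | 0 < φ t x} ≤ ENNReal.ofReal D)) ↔
    (∃ (α : ℝ → ℝ) (M : ℝ → ℝ → ℝ),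
      (∀ δ : ℝ, 0 < δ → 0 < α δ) ∧
      (∀ δ K : ℝ, 0 < δ → 0 < K → 0 < M δ K) ∧
      ∀ δ : ℝ, 0 < δ → ∀ K : ℝ, 0 < K → ∀ A : Set X, ∀ f : A → S → ℝ,
        ((∀ a s, 0 ≤ f a s) ∧ ∀ a, HasSum (fun s => f a s) 1) →
        (∀ a b : A, edist a b ≠ ⊤ →
          (∑' s, |f a s - f b s|) ≤ α δ * (edist a b).toReal + α δ) →
        (∀ s, EMetric.diam {a : A | 0 < f a s} ≤ ENNReal.ofReal K) →
        ∃ g : X → S → ℝ,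
          ((∀ x s, 0 ≤ g x s) ∧ ∀ x, HasSum (fun s => g x s) 1) ∧
          (∀ x y : X, edist x y ≠ ⊤ →
            (∑' s, |g x s - g y s|) ≤ δ * (edist x y).toReal + δ) ∧
          (∀ s, EMetric.diam {x : X | 0 < g x s} ≤ ENNReal.ofReal (M δ K)) ∧
          (∀ a : A, g (a : X) = f a)) :=
  stmt5_general (by simpa only [lift_id] using hcard)
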